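/- For positive integers n and complex parameters z, w, q (generic), the following transformation holds: ((q w^2; q^2)_n/(w^2;q)_n) · ((q^{-r} w/z;q)_n/(w/z;q)_n) · 4φ3[ w/z, q^r w z, w^2/q, q^{-n} ; w z, q^{-r} w/z, q^n w^2 ; q, -q^{n-r+1} ] = q^{-binom(r,2)} (-q;q)_{n-r} ((q z^2;q^2)_r/(q z^2;q)_r) · 6φ5[ z^2, q z, -q z, q^n w z, q z/w, q^{-r} ; z, -z, w z, q^{1-n} z/w, q^{r+1} z^2 ; q, -q^{r-n} ], for integers 0 ≤ r ≤ n. -/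

import Mathlib

open Finset

/-- The q-Pochhammer symbol `(x;q)_k = ∏_{l=0}^{k-1} (1 - x q^l)`. -/
def qPoch {F : Type*} [Field F] (x q : F) (k : ℕ) : F :=
  ∏ l ∈ Finset.range k, (1 - x * q ^ l)

/-! Write `X` for the function `i ↦ q ^ i`. With `u = w z`, `v = w / (z q ^ r)` and `c = w ^ 2 / q`,
the `₄φ₃` is, up to a product, the q-Kummer series
`₂φ₁[c, q ^ (-n); c q ^ (n + 1); q, -q ^ (n + 1)]` with the test function
`(u X; q)_r (v X; q)_r / X ^ r` inserted in its summand. Summation by parts gives a three-term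
relation that expresses the sum for `(z, r + 1)` through those for `(z, r)` and `(z q, r)`. By the
two q-Pascal rules, the very-well-poised `₆φ₅` satisfies the same relation. At `r = 0` the test
function is constant and the q-Kummer series is evaluated in closed form (the Bailey–Daum sum), by
one more summation by parts. -/

section QPochhammer

variable {F : Type*} [Field F] {q : F}

theorem qPoch_zero (x q : F) : qPoch x q 0 = 1 := prod_range_zero _

theorem qPoch_succ (x q : F) (k : ℕ) : qPoch x q (k + 1) = qPoch x q k * (1 - x * q ^ k) :=
  prod_range_succ _ _

theorem qPoch_add (x q : F) (m k : ℕ) :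
    qPoch x q (m + k) = qPoch x q m * qPoch (x * q ^ m) q k := by
  simp only [qPoch, prod_range_add, pow_add, mul_assoc]

theorem qPoch_succ' (x q : F) (k : ℕ) : qPoch x q (k + 1) = (1 - x) * qPoch (x * q) q k := by
  rw [add_comm, qPoch_add, qPoch_succ, qPoch_zero, pow_zero, pow_one, mul_one, one_mul]

theorem qPoch_mul_qPoch_comm (x q : F) (m k : ℕ) :
    qPoch x q m * qPoch (x * q ^ m) q k = qPoch x q k * qPoch (x * q ^ k) q m := by
  rw [← qPoch_add, ← qPoch_add, add_comm]

theorem one_sub_mul_qPoch (x q : F) (k : ℕ) :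
    (1 - x) * qPoch (x * q) q k = qPoch x q k * (1 - x * q ^ k) := by
  rw [← qPoch_succ', ← qPoch_succ]

theorem qPoch_ne_zero {x : F} (h : ∀ l : ℕ, x * q ^ l ≠ 1) (k : ℕ) : qPoch x q k ≠ 0 :=
  prod_ne_zero_iff.2 fun l _ => sub_ne_zero.2 (h l).symm

theorem qPoch_mul_pow_ne_zero {x : F} (h : ∀ l : ℕ, x * q ^ l ≠ 1) (m k : ℕ) :
    qPoch (x * q ^ m) q k ≠ 0 :=
  qPoch_ne_zero (fun l => by
    rw [mul_assoc, ← pow_add]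
    exact h (m + l)) k

theorem qPoch_self_ne_zero (hq : ∀ m : ℕ, q ^ (m + 1) ≠ 1) (k : ℕ) : qPoch q q k ≠ 0 :=
  qPoch_ne_zero (fun l => by simpa only [pow_succ'] using hq l) k

theorem qPoch_mul_qPoch_div {x : F} {r n : ℕ} (hr : r ≤ n) {i : ℕ} (hi : qPoch x q i ≠ 0) :
    qPoch x q n * (qPoch (x * q ^ r) q i / qPoch x q i) =
      qPoch (x * q ^ r) q (n - r) * qPoch (x * q ^ i) q r := by
  obtain ⟨d, rfl⟩ := Nat.exists_eq_add_of_le hr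
  rw [Nat.add_sub_cancel_left, qPoch_add, mul_div_assoc', div_eq_iff hi]
  linear_combination qPoch (x * q ^ r) q d * qPoch_mul_qPoch_comm x q r i

theorem qPoch_div_pow (hq0 : q ≠ 0) {x : F} (hx : x ≠ 0) (n i : ℕ) :
    qPoch (x / q ^ i) q n * qPoch (q / (x * q ^ n)) q i * (q ^ n) ^ i =
      qPoch x q n * qPoch (q / x) q i := by
  induction i with
  | zero => simp [qPoch_zero]
  | succ i ih =>
    have hshift := one_sub_mul_qPoch (x / q ^ (i + 1)) q n
    have hX : q ^ i ≠ 0 := pow_ne_zero _ hq0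
    have hQ : q ^ n ≠ 0 := pow_ne_zero _ hq0
    rw [show x / q ^ (i + 1) * q = x / q ^ i by rw [pow_succ]; field_simp] at hshift
    have hleft : (1 - q / (x * q ^ n) * q ^ i) * q ^ n =
        -(q / x * q ^ i) * (1 - x / q ^ (i + 1) * q ^ n) := by field_simp; ring
    have hright : 1 - q / x * q ^ i = -(q / x * q ^ i) * (1 - x / q ^ (i + 1)) := by
      field_simp; ring
    rw [qPoch_succ, qPoch_succ, pow_succ (q ^ n), hright]
    generalize 1 - q / (x * q ^ n) * q ^ i = e at *
    generalize x / q ^ (i + 1) = y at *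
    linear_combination
      qPoch y q n * qPoch (q / (x * q ^ n)) q i * (q ^ n) ^ i * hleft +
      q / x * q ^ i * qPoch (q / (x * q ^ n)) q i * (q ^ n) ^ i * hshift -
      q / x * q ^ i * (1 - y) * ih

end QPochhammer

section Kummer

variable {F : Type*} [Field F] {q : F}

/-- The `i`-th summand of the q-Kummer series `₂φ₁[c, q ^ (-n); c q ^ (n + 1); q, -q ^ (n + 1)]`. -/
def kummerTerm (q c : F) (n i : ℕ) : F :=
  qPoch c q i * qPoch (q ^ n)⁻¹ q i / (qPoch (c * q ^ (n + 1)) q i * qPoch q q i) *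
    (-q ^ (n + 1)) ^ i

/-- The terminating q-Kummer series with its `i`-th summand multiplied by `f i`, as a linear
functional of `f`, so that identities between test functions transfer to sums. -/
def kummerSum (q c : F) (n : ℕ) : (ℕ → F) →ₗ[F] F :=
  ∑ i ∈ range (n + 1), kummerTerm q c n i • LinearMap.proj i

theorem kummerSum_apply (q c : F) (n : ℕ) (f : ℕ → F) :
    kummerSum q c n f = ∑ i ∈ range (n + 1), kummerTerm q c n i * f i := by
  simp [kummerSum]

variable {c : F}

theorem qPoch_mul_pow_succ_ne_zero (hc : ∀ m : ℕ, c * q ^ (m + 1) ≠ 1) (n k : ℕ) :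
    qPoch (c * q ^ (n + 1)) q k ≠ 0 :=
  qPoch_ne_zero (fun l => by
    rw [mul_assoc, ← pow_add, add_right_comm]
    exact hc (n + l)) k

theorem kummerTerm_succ (hq0 : q ≠ 0) (hq : ∀ m : ℕ, q ^ (m + 1) ≠ 1)
    (hc : ∀ m : ℕ, c * q ^ (m + 1) ≠ 1) (n i : ℕ) :
    kummerTerm q c n (i + 1) * ((1 - q ^ (i + 1)) * (1 - c * q ^ n * q ^ (i + 1))) =
      kummerTerm q c n i * (q * (1 - c * q ^ i) * (q ^ i - q ^ n)) := by
  have hQ : q ^ n ≠ 0 := pow_ne_zero _ hq0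
  have hqi := qPoch_self_ne_zero hq (i + 1)
  have hci := qPoch_mul_pow_succ_ne_zero hc n (i + 1)
  rw [qPoch_succ] at hqi hci
  obtain ⟨hqi, hqi'⟩ := mul_ne_zero_iff.1 hqi
  obtain ⟨hci, hci'⟩ := mul_ne_zero_iff.1 hci
  have hroot : (1 - (q ^ n)⁻¹ * q ^ i) * -q ^ (n + 1) = q * (q ^ i - q ^ n) := by
    field_simp; ring
  simp only [kummerTerm, qPoch_succ, pow_succ (-q ^ (n + 1)) i]
  rw [show 1 - q ^ (i + 1) = 1 - q * q ^ i by ring,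
    show 1 - c * q ^ n * q ^ (i + 1) = 1 - c * q ^ (n + 1) * q ^ i by ring]
  generalize 1 - q * q ^ i = E at *
  generalize 1 - c * q ^ (n + 1) * q ^ i = E' at *
  generalize qPoch (q ^ n)⁻¹ q i = p
  generalize 1 - (q ^ n)⁻¹ * q ^ i = e at *
  generalize -q ^ (n + 1) = s at *
  field_simp
  linear_combination (qPoch c q i * (1 - c * q ^ i) * p * s ^ i) * hroot

theorem kummerSum_summation_by_parts (hq0 : q ≠ 0) (hq : ∀ m : ℕ, q ^ (m + 1) ≠ 1)
    (hc : ∀ m : ℕ, c * q ^ (m + 1) ≠ 1) (n : ℕ) (h : ℕ → F) :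
    kummerSum q c n (fun i => (1 - q ^ i) * (1 - c * q ^ n * q ^ i) * h i) =
      kummerSum q c n (fun i => q * (1 - c * q ^ i) * (q ^ i - q ^ n) * h (i + 1)) := by
  rw [kummerSum_apply, kummerSum_apply, sum_range_succ', sum_range_succ]
  simp only [pow_zero, sub_self, zero_mul, mul_zero, add_zero]
  refine sum_congr rfl fun i _ => ?_
  linear_combination h (i + 1) * kummerTerm_succ hq0 hq hc n i

theorem kummerTerm_mul_eq_kummerTerm_succ_left (hq0 : q ≠ 0) (hq : ∀ m : ℕ, q ^ (m + 1) ≠ 1)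
    (hc : ∀ m : ℕ, c * q ^ (m + 1) ≠ 1) (n i : ℕ) :
    kummerTerm q c n i * ((q ^ (n + 1) - 1) * (1 - c * q ^ (n + 1))) =
      kummerTerm q c (n + 1) i *
        ((q ^ (n + 1) - q ^ i) * (1 - c * q ^ (n + 1) * q ^ i) / q ^ i) := by
  have hX : q ^ i ≠ 0 := pow_ne_zero _ hq0
  have hQ : q ^ n ≠ 0 := pow_ne_zero _ hq0
  have hnum := one_sub_mul_qPoch (q ^ (n + 1))⁻¹ q i
  have hden := one_sub_mul_qPoch (c * q ^ (n + 1)) q i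
  rw [show (q ^ (n + 1))⁻¹ * q = (q ^ n)⁻¹ by rw [pow_succ]; field_simp] at hnum
  rw [mul_assoc c, ← pow_succ] at hden
  replace hnum : (q ^ (n + 1) - 1) * qPoch (q ^ n)⁻¹ q i =
      (q ^ (n + 1) - q ^ i) * qPoch (q ^ (n + 1))⁻¹ q i := by
    have hinv : q ^ (n + 1) * (q ^ (n + 1))⁻¹ = 1 := mul_inv_cancel₀ (pow_ne_zero _ hq0)
    linear_combination q ^ (n + 1) * hnum +
      (qPoch (q ^ n)⁻¹ q i - qPoch (q ^ (n + 1))⁻¹ q i * q ^ i) * hinv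
  have hqi := qPoch_self_ne_zero hq i
  have hcn := qPoch_mul_pow_succ_ne_zero hc n i
  have hcn' := qPoch_mul_pow_succ_ne_zero hc (n + 1) i
  simp only [kummerTerm]
  rw [show (-q ^ (n + 1 + 1)) ^ i = (-q ^ (n + 1)) ^ i * q ^ i by rw [← mul_pow]; ring]
  generalize qPoch (q ^ n)⁻¹ q i = p at *
  generalize qPoch (q ^ (n + 1))⁻¹ q i = p' at *
  generalize (-q ^ (n + 1)) ^ i = s
  field_simp
  linear_combination (qPoch c q i * s) *
    ((1 - c * q ^ (n + 1)) * qPoch (c * q ^ (n + 1 + 1)) q i * hnum +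
      (q ^ (n + 1) - q ^ i) * p' * hden)

theorem kummerSum_one_succ (hq0 : q ≠ 0) (hq : ∀ m : ℕ, q ^ (m + 1) ≠ 1)
    (hc : ∀ m : ℕ, c * q ^ (m + 1) ≠ 1) (n : ℕ) :
    (1 - c * q ^ (2 * n + 2)) * kummerSum q c (n + 1) 1 =
      (1 + q ^ (n + 1)) * (1 - c * q ^ (n + 1)) * kummerSum q c n 1 := by
  set g : ℕ → F := fun i => (q ^ (n + 1) - q ^ i) * (1 - c * q ^ (n + 1) * q ^ i) / q ^ i with hg
  have hlower : (q ^ (n + 1) - 1) * (1 - c * q ^ (n + 1)) * kummerSum q c n 1 =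
      kummerSum q c (n + 1) g := by
    rw [kummerSum_apply, kummerSum_apply, sum_range_succ _ (n + 1), mul_sum]
    simp only [hg, sub_self, zero_mul, zero_div, mul_zero, add_zero]
    refine sum_congr rfl fun i _ => ?_
    rw [← kummerTerm_mul_eq_kummerTerm_succ_left hq0 hq hc, Pi.one_apply, mul_one, mul_comm]
  have hparts := kummerSum_summation_by_parts hq0 hq hc (n + 1) (fun i => (q ^ i)⁻¹)
  set f₁ : ℕ → F := fun i => (1 - q ^ i) * (1 - c * q ^ (n + 1) * q ^ i) * (q ^ i)⁻¹
  set f₂ : ℕ → F := fun i => q * (1 - c * q ^ i) * (q ^ i - q ^ (n + 1)) * (q ^ (i + 1))⁻¹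
  have hcomb : ((1 - c * q ^ (2 * n + 2)) * (q ^ (n + 1) - 1)) • (1 : ℕ → F) =
      (1 + q ^ (n + 1)) • g - q ^ (n + 1) • (f₁ - f₂) := by
    funext i
    have hX : q ^ i ≠ 0 := pow_ne_zero _ hq0
    simp only [f₁, f₂, hg, Pi.smul_apply, Pi.sub_apply, Pi.one_apply, smul_eq_mul]
    field_simp
    ring
  have hsum := congrArg (kummerSum q c (n + 1)) hcomb
  simp only [map_smul, map_sub, smul_eq_mul, hparts, sub_self, mul_zero, sub_zero, ← hlower] at hsum
  refine mul_left_cancel₀ (sub_ne_zero.2 (hq n)) ?_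
  linear_combination hsum

theorem kummerSum_one (hq0 : q ≠ 0) (hq : ∀ m : ℕ, q ^ (m + 1) ≠ 1)
    (hc : ∀ m : ℕ, c * q ^ (m + 1) ≠ 1) (n : ℕ) :
    qPoch (c * q ^ 2) (q ^ 2) n * kummerSum q c n 1 = qPoch (c * q) q n * qPoch (-q) q n := by
  induction n with
  | zero => simp [kummerSum_apply, kummerTerm, qPoch_zero]
  | succ n ih =>
    simp only [qPoch_succ]
    linear_combination qPoch (c * q ^ 2) (q ^ 2) n * kummerSum_one_succ hq0 hq hc n +
      (1 + q ^ (n + 1)) * (1 - c * q ^ (n + 1)) * ih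

end Kummer

section Contiguous

variable {F : Type*} [Field F] {q : F}

/-- The test function `(u X; q)_r (v X; q)_r / X ^ r`, where `X = q ^ i`; inserted in the q-Kummer
series it produces a `₄φ₃`. -/
def qPochPair (q u v : F) (r i : ℕ) : F :=
  qPoch (u * q ^ i) q r * qPoch (v * q ^ i) q r / (q ^ i) ^ r

theorem qPoch_mul_qPoch_contiguous (q u v X : F) (r d : ℕ) :
    q ^ r * (1 + q ^ (d + 1)) * (v - u) * (qPoch (u * X) q (r + 1) * qPoch (v * X) q (r + 1)) =
      (v - u * q ^ r) * (1 - u * q ^ r) * (1 - v * q ^ (r + 1 + d)) * X *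
          (qPoch (u * X) q r * qPoch (v * X * q) q r) +
        (v * q ^ r - u) * (1 - v * q ^ r) * (1 - u * q ^ (r + 1 + d)) * X *
          (qPoch (u * X * q) q r * qPoch (v * X) q r) +
        (v - u) *
          (q ^ r * ((1 - X) * (1 - u * v * q ^ r * q ^ (r + 1 + d) * X) *
            (qPoch (u * X) q r * qPoch (v * X) q r)) -
          (1 - u * v * q ^ r * X) * (X - q ^ (r + 1 + d)) *
            (qPoch (u * X * q) q r * qPoch (v * X * q) q r)) := by
  cases r with
  | zero =>
    simp only [qPoch_succ, qPoch_zero]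
    ring
  | succ r =>
    rw [qPoch_succ (u * X), qPoch_succ (v * X)]
    simp only [qPoch_succ' (u * X) q r, qPoch_succ' (v * X) q r]
    rw [qPoch_succ (u * X * q), qPoch_succ (v * X * q)]
    ring

theorem kummerSum_qPochPair_succ (hq0 : q ≠ 0) (hq : ∀ m : ℕ, q ^ (m + 1) ≠ 1) {c u v : F}
    (hc : ∀ m : ℕ, c * q ^ (m + 1) ≠ 1) {r : ℕ} (huv : u * v * q ^ r = c) (d : ℕ) :
    q ^ r * (1 + q ^ (d + 1)) * (v - u) * kummerSum q c (r + 1 + d) (qPochPair q u v (r + 1)) =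
      (v - u * q ^ r) * (1 - u * q ^ r) * (1 - v * q ^ (r + 1 + d)) *
          kummerSum q c (r + 1 + d) (qPochPair q u (v * q) r) +
        (v * q ^ r - u) * (1 - v * q ^ r) * (1 - u * q ^ (r + 1 + d)) *
          kummerSum q c (r + 1 + d) (qPochPair q (u * q) v r) := by
  have hparts := kummerSum_summation_by_parts hq0 hq hc (r + 1 + d)
    (fun i => qPoch (u * q ^ i) q r * qPoch (v * q ^ i) q r / (q ^ i) ^ (r + 1))
  set f₁ : ℕ → F := fun i => (1 - q ^ i) * (1 - c * q ^ (r + 1 + d) * q ^ i) *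
    (qPoch (u * q ^ i) q r * qPoch (v * q ^ i) q r / (q ^ i) ^ (r + 1))
  set f₂ : ℕ → F := fun i => q * (1 - c * q ^ i) * (q ^ i - q ^ (r + 1 + d)) *
    (qPoch (u * q ^ (i + 1)) q r * qPoch (v * q ^ (i + 1)) q r / (q ^ (i + 1)) ^ (r + 1))
  have hcomb : (q ^ r * (1 + q ^ (d + 1)) * (v - u)) • qPochPair q u v (r + 1) =
      ((v - u * q ^ r) * (1 - u * q ^ r) * (1 - v * q ^ (r + 1 + d))) • qPochPair q u (v * q) r +
        ((v * q ^ r - u) * (1 - v * q ^ r) * (1 - u * q ^ (r + 1 + d))) •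
          qPochPair q (u * q) v r + (q ^ r * (v - u)) • (f₁ - f₂) := by
    funext i
    have hX : q ^ i ≠ 0 := pow_ne_zero _ hq0
    have hR : q ^ r ≠ 0 := pow_ne_zero _ hq0
    have hcert := qPoch_mul_qPoch_contiguous q u v (q ^ i) r d
    subst huv
    simp only [f₁, f₂, qPochPair, Pi.smul_apply, Pi.add_apply, Pi.sub_apply, smul_eq_mul]
    rw [show u * q * q ^ i = u * q ^ i * q by ring, show v * q * q ^ i = v * q ^ i * q by ring,
      show u * q ^ (i + 1) = u * q ^ i * q by ring, show v * q ^ (i + 1) = v * q ^ i * q by ring,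
      show (q ^ (i + 1)) ^ (r + 1) = (q ^ i) ^ (r + 1) * (q * q ^ r) by ring, pow_succ (q ^ i) r]
    have hXr : (q ^ i) ^ r ≠ 0 := pow_ne_zero _ hX
    generalize (q ^ i) ^ r = Y at *
    generalize q ^ i = X at *
    generalize q ^ (r + 1 + d) = Q at *
    field_simp
    linear_combination hcert
  have hsum := congrArg (kummerSum q c (r + 1 + d)) hcomb
  simpa only [map_add, map_sub, map_smul, smul_eq_mul, hparts, sub_self, mul_zero, add_zero]
    using hsum

/-- The `₄φ₃` with numerator parameters `v q ^ r, u q ^ r, c, q ^ (-n)`, denominator parameters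
`u, v, c q ^ (n + 1)` and argument `-q ^ (n - r + 1)`, multiplied by `(u; q)_n (v; q)_n`; this
product absorbs the denominators that involve `u` and `v`. -/
def normalizedPhi43 (q c u v : F) (n r : ℕ) : F :=
  qPoch (u * q ^ r) q (n - r) * qPoch (v * q ^ r) q (n - r) *
    kummerSum q c n (qPochPair q u v r)

theorem normalizedPhi43_succ (hq0 : q ≠ 0) (hq : ∀ m : ℕ, q ^ (m + 1) ≠ 1) {c u v : F}
    (hc : ∀ m : ℕ, c * q ^ (m + 1) ≠ 1) {r : ℕ} (huv : u * v * q ^ r = c) (d : ℕ) :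
    q ^ r * (1 + q ^ (d + 1)) * (v - u) * normalizedPhi43 q c u v (r + 1 + d) (r + 1) =
      (v - u * q ^ r) * normalizedPhi43 q c u (v * q) (r + 1 + d) r +
        (v * q ^ r - u) * normalizedPhi43 q c (u * q) v (r + 1 + d) r := by
  have hrec := kummerSum_qPochPair_succ hq0 hq hc huv d
  simp only [normalizedPhi43, show r + 1 + d - (r + 1) = d by lia,
    show r + 1 + d - r = d + 1 by lia]
  have hright : ∀ x : F, x * q ^ r * q = x * q ^ (r + 1) := fun x => by ring
  have hleft : ∀ x : F, x * q * q ^ r = x * q ^ (r + 1) := fun x => by ring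
  simp only [qPoch_succ' (_ * q ^ r), hright, hleft]
  rw [qPoch_succ, qPoch_succ, mul_assoc u (q ^ _), mul_assoc v (q ^ _), ← pow_add]
  linear_combination qPoch (u * q ^ (r + 1)) q d * qPoch (v * q ^ (r + 1)) q d * hrec

theorem normalizedPhi43_zero (hq0 : q ≠ 0) (hq : ∀ m : ℕ, q ^ (m + 1) ≠ 1) {c : F}
    (hc : ∀ m : ℕ, c * q ^ (m + 1) ≠ 1) (u v : F) (n : ℕ) :
    qPoch (c * q ^ 2) (q ^ 2) n * normalizedPhi43 q c u v n 0 =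
      qPoch (c * q) q n * qPoch (-q) q n * (qPoch u q n * qPoch v q n) := by
  have hone : qPochPair q u v 0 = 1 := by funext i; simp [qPochPair, qPoch_zero]
  simp only [normalizedPhi43, hone, pow_zero, mul_one, Nat.sub_zero]
  linear_combination qPoch u q n * qPoch v q n * kummerSum_one hq0 hq hc n

end Contiguous

section WellPoised

variable {F : Type*} [Field F] {q : F}

/-- The coefficient `q ^ (i choose 2) [r choose i]_q` of `x ^ i` in Gauss's q-binomial formula for
`∏ k < r, (1 + q ^ k x)`, encoded as a quotient and hence meaningful only when `q` is not a root of
unity of order at most `i`. -/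
def gaussCoeff (q : F) (r i : ℕ) : F := (∏ l ∈ range i, (q ^ l - q ^ r)) / qPoch q q i

theorem gaussCoeff_zero_right (q : F) (r : ℕ) : gaussCoeff q r 0 = 1 := by
  simp [gaussCoeff, qPoch_zero]

theorem gaussCoeff_self_succ (q : F) (r : ℕ) : gaussCoeff q r (r + 1) = 0 := by
  simp [gaussCoeff, prod_range_succ]

theorem gaussCoeff_eq_qPoch (hq0 : q ≠ 0) (r i : ℕ) :
    gaussCoeff q r i = qPoch (q ^ r)⁻¹ q i * (-q ^ r) ^ i / qPoch q q i := by
  have hR : q ^ r ≠ 0 := pow_ne_zero _ hq0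
  have hfactor : ∀ l, q ^ l - q ^ r = (1 - (q ^ r)⁻¹ * q ^ l) * -q ^ r := fun l => by
    field_simp
    ring
  simp only [gaussCoeff, hfactor, prod_mul_distrib, prod_const, card_range, qPoch]

theorem gaussCoeff_succ_right (hq : ∀ m : ℕ, q ^ (m + 1) ≠ 1) (r i : ℕ) :
    gaussCoeff q r (i + 1) * (1 - q ^ (i + 1)) = gaussCoeff q r i * (q ^ i - q ^ r) := by
  have hi : 1 - q ^ (i + 1) ≠ 0 := sub_ne_zero.2 (hq i).symm
  rw [gaussCoeff, gaussCoeff, prod_range_succ, qPoch_succ, ← pow_succ']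
  field_simp

theorem gaussCoeff_succ_succ (hq : ∀ m : ℕ, q ^ (m + 1) ≠ 1) (r i : ℕ) :
    gaussCoeff q (r + 1) (i + 1) = gaussCoeff q r (i + 1) + q ^ r * gaussCoeff q r i := by
  have hi : 1 - q ^ (i + 1) ≠ 0 := sub_ne_zero.2 (hq i).symm
  have hprod : ∏ l ∈ range (i + 1), (q ^ l - q ^ (r + 1)) =
      (1 - q ^ (r + 1)) * (q ^ i * ∏ l ∈ range i, (q ^ l - q ^ r)) := by
    rw [prod_range_succ', pow_zero, mul_comm, ← card_range i, ← prod_const, card_range,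
      ← prod_mul_distrib]
    exact congrArg _ (prod_congr rfl fun l _ => by ring)
  have hstep : gaussCoeff q (r + 1) (i + 1) * (1 - q ^ (i + 1)) =
      (1 - q ^ (r + 1)) * q ^ i * gaussCoeff q r i := by
    rw [gaussCoeff, gaussCoeff, hprod, qPoch_succ, ← pow_succ']
    field_simp
  refine mul_right_cancel₀ hi ?_
  linear_combination hstep - gaussCoeff_succ_right hq r i

theorem gaussCoeff_succ_succ' (hq : ∀ m : ℕ, q ^ (m + 1) ≠ 1) (r i : ℕ) :
    gaussCoeff q (r + 1) (i + 1) =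
      q ^ (i + 1) * gaussCoeff q r (i + 1) + q ^ i * gaussCoeff q r i := by
  linear_combination gaussCoeff_succ_succ hq r i + gaussCoeff_succ_right hq r i

/-- The very-well-poised series based on `y` and terminated by `q ^ (-r)`, with an arbitrary
function `g` in place of its remaining parameters. -/
def wellPoisedSum (q y : F) (r : ℕ) (g : ℕ → F) : F :=
  ∑ i ∈ range (r + 1),
    gaussCoeff q r i * (1 - y * q ^ (2 * i)) / qPoch (y * q ^ i) q (r + 1) * g i

theorem wellPoised_coeff_succ (hq : ∀ m : ℕ, q ^ (m + 1) ≠ 1) {y : F}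
    (hy : ∀ m : ℕ, y * q ^ m ≠ 1) (r i : ℕ) :
    (1 - y * q ^ (r + 1)) * (gaussCoeff q (r + 1) (i + 1) / qPoch (y * q ^ (i + 1)) q (r + 2)) =
      gaussCoeff q r (i + 1) / qPoch (y * q ^ (i + 1)) q (r + 1) +
        q ^ r * (gaussCoeff q r i / qPoch (y * q ^ (i + 2)) q (r + 1)) := by
  have hfirst : 1 - y * q ^ (i + 1) ≠ 0 := sub_ne_zero.2 (hy _).symm
  have hlast : 1 - y * q ^ (i + 1) * q ^ (r + 1) ≠ 0 := by
    rw [mul_assoc, ← pow_add]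
    exact sub_ne_zero.2 (hy _).symm
  have hmid := qPoch_mul_pow_ne_zero hy (i + 2) r
  have hright : qPoch (y * q ^ (i + 2)) q (r + 1) =
      qPoch (y * q ^ (i + 2)) q r * (1 - y * q ^ (i + 1) * q ^ (r + 1)) := by
    rw [qPoch_succ]; ring
  have hleft : qPoch (y * q ^ (i + 1)) q (r + 1) =
      (1 - y * q ^ (i + 1)) * qPoch (y * q ^ (i + 2)) q r := by
    rw [qPoch_succ', mul_assoc y, ← pow_succ]
  rw [qPoch_succ _ _ (r + 1), hright, hleft]
  generalize hE : 1 - y * q ^ (i + 1) = E at *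
  generalize hE' : 1 - y * q ^ (i + 1) * q ^ (r + 1) = E' at *
  field_simp
  rw [← hE, ← hE']
  linear_combination gaussCoeff_succ_succ hq r i -
    y * q ^ (r + 1) * gaussCoeff_succ_succ' hq r i

theorem wellPoisedSum_succ (hq : ∀ m : ℕ, q ^ (m + 1) ≠ 1) {y : F}
    (hy : ∀ m : ℕ, y * q ^ m ≠ 1) (r : ℕ) (g : ℕ → F) :
    (1 - y * q ^ (r + 1)) * wellPoisedSum q y (r + 1) g =
      wellPoisedSum q y r g + q ^ r * wellPoisedSum q (y * q ^ 2) r (fun i => g (i + 1)) := by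
  have hlast : 1 - y * q ^ (r + 1) ≠ 0 := sub_ne_zero.2 (hy _).symm
  have hextend : wellPoisedSum q y r g = ∑ i ∈ range (r + 2),
      gaussCoeff q r i * (1 - y * q ^ (2 * i)) / qPoch (y * q ^ i) q (r + 1) * g i := by
    rw [sum_range_succ _ (r + 1), gaussCoeff_self_succ, zero_mul, zero_div, zero_mul, add_zero,
      wellPoisedSum]
  have hhead : (1 - y * q ^ (r + 1)) * (1 / qPoch y q (r + 2)) = 1 / qPoch y q (r + 1) := by
    rw [qPoch_succ _ _ (r + 1)]
    field_simp
  have htail : (1 - y * q ^ (r + 1)) * ∑ i ∈ range (r + 1), gaussCoeff q (r + 1) (i + 1) *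
        (1 - y * q ^ (2 * (i + 1))) / qPoch (y * q ^ (i + 1)) q (r + 2) * g (i + 1) =
      ∑ i ∈ range (r + 1), gaussCoeff q r (i + 1) * (1 - y * q ^ (2 * (i + 1))) /
          qPoch (y * q ^ (i + 1)) q (r + 1) * g (i + 1) +
        q ^ r * wellPoisedSum q (y * q ^ 2) r (fun i => g (i + 1)) := by
    rw [wellPoisedSum, mul_sum, mul_sum, ← sum_add_distrib]
    refine sum_congr rfl fun i _ => ?_
    rw [mul_assoc y, ← pow_add, mul_assoc y, ← pow_add, add_comm 2 i, add_comm 2 (2 * i)]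
    linear_combination (1 - y * q ^ (2 * (i + 1))) * g (i + 1) * wellPoised_coeff_succ hq hy r i
  rw [hextend, sum_range_succ', wellPoisedSum, sum_range_succ', mul_add, htail]
  simp only [gaussCoeff_zero_right, pow_zero, mul_zero, mul_one, one_mul]
  linear_combination (1 - y) * g 0 * hhead

end WellPoised

section Recurrence

variable {F : Type*} [Field F] {q : F}

theorem div_self_mul_pow_succ_ne_one (hq0 : q ≠ 0) {x : F} (hx : ∀ m : ℕ, x * q ^ m ≠ 1) (m : ℕ) :
    x / q * q ^ (m + 1) ≠ 1 := by
  rw [pow_succ' q, ← mul_assoc, div_mul_cancel₀ _ hq0]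
  exact hx m

theorem normalizedPhi43_succ_of_mul_div (hq0 : q ≠ 0) (hq : ∀ m : ℕ, q ^ (m + 1) ≠ 1) {w z : F}
    (hw0 : w ≠ 0) (hz0 : z ≠ 0) (hw2 : ∀ m : ℕ, w ^ 2 * q ^ m ≠ 1) (r d : ℕ) :
    q ^ r * (1 + q ^ (d + 1)) * (1 - z ^ 2 * q ^ (r + 1)) *
        normalizedPhi43 q (w ^ 2 / q) (w * z) (w / (z * q ^ (r + 1))) (r + 1 + d) (r + 1) =
      (1 - q * z ^ 2 * (q ^ 2) ^ r) *
          normalizedPhi43 q (w ^ 2 / q) (w * z) (w / (z * q ^ r)) (r + 1 + d) r +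
        q ^ r * (1 - q * z ^ 2) *
          normalizedPhi43 q (w ^ 2 / q) (w * (z * q)) (w / (z * q * q ^ r)) (r + 1 + d) r := by
  have hR : q ^ r ≠ 0 := pow_ne_zero _ hq0
  have hrec := normalizedPhi43_succ hq0 hq (div_self_mul_pow_succ_ne_one hq0 hw2)
    (u := w * z) (v := w / (z * q ^ (r + 1))) (r := r)
    (by rw [pow_succ]; field_simp) d
  rw [show w / (z * q ^ (r + 1)) * q = w / (z * q ^ r) by rw [pow_succ]; field_simp,
    mul_assoc w z q] at hrec
  rw [show z * q * q ^ r = z * q ^ (r + 1) by ring]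
  generalize normalizedPhi43 q _ _ _ _ (r + 1) = A at *
  generalize normalizedPhi43 q _ (w * z) _ _ r = B at *
  generalize normalizedPhi43 q _ (w * (z * q)) _ _ r = C at *
  rw [pow_succ] at hrec ⊢
  field_simp at hrec
  linear_combination hrec

theorem normalizedPhi43_zero_eq_wellPoisedSum (hq0 : q ≠ 0) (hq : ∀ m : ℕ, q ^ (m + 1) ≠ 1)
    {w z : F} (hw2 : ∀ m : ℕ, w ^ 2 * q ^ m ≠ 1) (hz2 : ∀ m : ℕ, z ^ 2 * q ^ m ≠ 1) (n : ℕ) :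
    qPoch (q * w ^ 2) (q ^ 2) n * normalizedPhi43 q (w ^ 2 / q) (w * z) (w / z) n 0 =
      qPoch (w ^ 2) q n * qPoch (-q) q n * wellPoisedSum q (z ^ 2) 0
        (fun i => qPoch (w * z * q ^ i) q n * qPoch (w / (z * q ^ i)) q n) := by
  have hzero :=
    normalizedPhi43_zero hq0 hq (div_self_mul_pow_succ_ne_one hq0 hw2) (w * z) (w / z) n
  rw [div_mul_cancel₀ _ hq0, show w ^ 2 / q * q ^ 2 = q * w ^ 2 by field_simp] at hzero
  have hy : 1 - z ^ 2 ≠ 0 := sub_ne_zero.2 (by simpa using (hz2 0).symm)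
  simpa [wellPoisedSum, gaussCoeff_zero_right, qPoch_succ, qPoch_zero, hy] using hzero

theorem normalizedPhi43_eq_wellPoisedSum (hq0 : q ≠ 0) (hq : ∀ m : ℕ, q ^ (m + 1) ≠ 1) {w : F}
    (hw0 : w ≠ 0) (hw2 : ∀ m : ℕ, w ^ 2 * q ^ m ≠ 1) {n r : ℕ} (hr : r ≤ n) {z : F} (hz0 : z ≠ 0)
    (hz2 : ∀ m : ℕ, z ^ 2 * q ^ m ≠ 1) :
    q ^ r.choose 2 * qPoch (q * w ^ 2) (q ^ 2) n *
        normalizedPhi43 q (w ^ 2 / q) (w * z) (w / (z * q ^ r)) n r =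
      qPoch (w ^ 2) q n * qPoch (-q) q (n - r) * qPoch (q * z ^ 2) (q ^ 2) r *
        wellPoisedSum q (z ^ 2) r
          (fun i => qPoch (w * z * q ^ i) q n * qPoch (w / (z * q ^ i)) q n) := by
  induction r generalizing z with
  | zero => simpa [qPoch_zero] using normalizedPhi43_zero_eq_wellPoisedSum hq0 hq hw2 hz2 n
  | succ r ih =>
    obtain ⟨d, rfl⟩ := Nat.exists_eq_add_of_le hr
    have hz := ih (by lia) hz0 hz2
    have hzq := ih (by lia) (mul_ne_zero hz0 hq0) (fun m => by
      rw [mul_pow, mul_assoc, ← pow_add]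
      exact hz2 _)
    have hphi := normalizedPhi43_succ_of_mul_div hq0 hq hw0 hz0 hw2 r d
    have hwp := wellPoisedSum_succ hq hz2 r
      (fun i => qPoch (w * z * q ^ i) q (r + 1 + d) * qPoch (w / (z * q ^ i)) q (r + 1 + d))
    have hpoch := one_sub_mul_qPoch (q * z ^ 2) (q ^ 2) r
    have hsq : 1 + q ^ (d + 1) ≠ 0 := fun h => hq (2 * d + 1) (by
      linear_combination (q ^ (d + 1) - 1) * h)
    have hlast : 1 - z ^ 2 * q ^ (r + 1) ≠ 0 := sub_ne_zero.2 (hz2 _).symm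
    have hmul : ∀ i, w * (z * q) * q ^ i = w * z * q ^ (i + 1) := fun i => by ring
    have hdiv : ∀ i, z * q * q ^ i = z * q ^ (i + 1) := fun i => by ring
    rw [show q * z ^ 2 * q ^ 2 = q * (z * q) ^ 2 by ring] at hpoch
    simp only [hmul, hdiv, mul_pow z q 2] at hzq hphi hpoch
    rw [show r + 1 + d - r = d + 1 by lia, qPoch_succ] at hz hzq
    rw [show r + 1 + d - (r + 1) = d by lia, qPoch_succ _ _ r, Nat.choose_succ_succ' r 1,
      Nat.choose_one_right, pow_add]
    refine mul_left_cancel₀ (mul_ne_zero hsq hlast) ?_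
    linear_combination
      q ^ r.choose 2 * qPoch (q * w ^ 2) (q ^ 2) (r + 1 + d) * hphi +
      (1 - q * z ^ 2 * (q ^ 2) ^ r) * hz + q ^ r * (1 - q * z ^ 2) * hzq +
      (1 + q ^ (d + 1)) * qPoch (w ^ 2) q (r + 1 + d) * qPoch (-q) q d *
        (q ^ r * wellPoisedSum q (z ^ 2 * q ^ 2) r (fun i =>
            qPoch (w * z * q ^ (i + 1)) q (r + 1 + d) *
              qPoch (w / (z * q ^ (i + 1))) q (r + 1 + d)) * hpoch -
          qPoch (q * z ^ 2) (q ^ 2) r * (1 - q * z ^ 2 * (q ^ 2) ^ r) * hwp)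

end Recurrence

section BasicHypergeometric

variable {F : Type*} [Field F] {q : F}

/-- The basic hypergeometric series with numerator parameters `as`, denominator parameters `bs` and
argument `ζ`, truncated after the term in `ζ ^ N`; it is the whole series when `q ^ (-N)` is among
the `as`. -/
def basicHypergeometricSum (as bs : List F) (q ζ : F) (N : ℕ) : F :=
  ∑ i ∈ range (N + 1),
    (as.map (qPoch · q i)).prod / (bs.map (qPoch · q i)).prod * ζ ^ i / qPoch q q i

theorem basicHypergeometricSum_four_three (a₁ a₂ a₃ a₄ b₁ b₂ b₃ q ζ : F) (N : ℕ) :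
    basicHypergeometricSum [a₁, a₂, a₃, a₄] [b₁, b₂, b₃] q ζ N =
      ∑ i ∈ range (N + 1), (qPoch a₁ q i * qPoch a₂ q i * qPoch a₃ q i * qPoch a₄ q i) /
        (qPoch b₁ q i * qPoch b₂ q i * qPoch b₃ q i) * ζ ^ i / qPoch q q i := by
  simp [basicHypergeometricSum, mul_assoc]

theorem basicHypergeometricSum_six_five (a₁ a₂ a₃ a₄ a₅ a₆ b₁ b₂ b₃ b₄ b₅ q ζ : F) (N : ℕ) :
    basicHypergeometricSum [a₁, a₂, a₃, a₄, a₅, a₆] [b₁, b₂, b₃, b₄, b₅] q ζ N =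
      ∑ i ∈ range (N + 1), (qPoch a₁ q i * qPoch a₂ q i * qPoch a₃ q i * qPoch a₄ q i *
          qPoch a₅ q i * qPoch a₆ q i) /
        (qPoch b₁ q i * qPoch b₂ q i * qPoch b₃ q i * qPoch b₄ q i * qPoch b₅ q i) *
          ζ ^ i / qPoch q q i := by
  simp [basicHypergeometricSum, mul_assoc]

theorem normalizedPhi43_eq_basicHypergeometricSum (hq0 : q ≠ 0) {u v : F}
    (hu : ∀ m : ℕ, u * q ^ m ≠ 1) (hv : ∀ m : ℕ, v * q ^ m ≠ 1) (c : F) {n r : ℕ} (hr : r ≤ n) :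
    normalizedPhi43 q c u v n r = qPoch u q n * qPoch v q n *
      basicHypergeometricSum [v * q ^ r, u * q ^ r, c, q ^ (-(n : ℤ))] [u, v, c * q ^ (n + 1)] q
        (-(q ^ (n - r + 1))) n := by
  rw [normalizedPhi43, kummerSum_apply, basicHypergeometricSum_four_three, mul_sum, mul_sum]
  refine sum_congr rfl fun i _ => ?_
  have hXr : (q ^ i) ^ r ≠ 0 := pow_ne_zero _ (pow_ne_zero _ hq0)
  have hpow : (-q ^ (n + 1)) ^ i = (-(q ^ (n - r + 1))) ^ i * (q ^ i) ^ r := by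
    rw [pow_right_comm q i r, ← mul_pow, neg_mul, ← pow_add, show n - r + 1 + r = n + 1 by lia]
  rw [kummerTerm, qPochPair, hpow, zpow_neg, zpow_natCast]
  calc
    _ = qPoch (u * q ^ r) q (n - r) * qPoch (u * q ^ i) q r *
          (qPoch (v * q ^ r) q (n - r) * qPoch (v * q ^ i) q r) *
          (qPoch c q i * qPoch (q ^ n)⁻¹ q i / (qPoch (c * q ^ (n + 1)) q i * qPoch q q i) *
            (-(q ^ (n - r + 1))) ^ i) := by
      field_simp
    _ = _ := by
      rw [← qPoch_mul_qPoch_div hr (qPoch_ne_zero hu i),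
        ← qPoch_mul_qPoch_div hr (qPoch_ne_zero hv i)]
      ring

theorem normalizedPhi43_mul_div_eq_basicHypergeometricSum (hq0 : q ≠ 0) {w z : F} (hz0 : z ≠ 0)
    (hwz : ∀ m : ℕ, w * z * q ^ m ≠ 1) (hwz' : ∀ m : ℤ, w / z * q ^ m ≠ 1) {n r : ℕ}
    (hr : r ≤ n) :
    normalizedPhi43 q (w ^ 2 / q) (w * z) (w / (z * q ^ r)) n r =
      qPoch (w * z) q n * qPoch (q ^ (-(r : ℤ)) * w / z) q n *
        basicHypergeometricSum [w / z, q ^ r * w * z, w ^ 2 / q, q ^ (-(n : ℤ))]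
          [w * z, q ^ (-(r : ℤ)) * w / z, q ^ n * w ^ 2] q (-(q ^ (n - r + 1))) n := by
  have hv : w / (z * q ^ r) = q ^ (-(r : ℤ)) * w / z := by
    rw [zpow_neg, zpow_natCast]
    field_simp
  have hv' : ∀ m : ℕ, w / (z * q ^ r) * q ^ m ≠ 1 := fun m h => hwz' (m - r) (by
    rw [← h, zpow_sub₀ hq0, zpow_natCast, zpow_natCast]
    field_simp)
  rw [normalizedPhi43_eq_basicHypergeometricSum hq0 hwz hv' _ hr,
    show w / (z * q ^ r) * q ^ r = w / z by field_simp,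
    show w * z * q ^ r = q ^ r * w * z by ring,
    show w ^ 2 / q * q ^ (n + 1) = q ^ n * w ^ 2 by field_simp; ring, hv]

theorem qPoch_mul_qPoch_neg_div {z : F} (hz2 : ∀ m : ℕ, z ^ 2 * q ^ m ≠ 1) (i : ℕ) :
    qPoch (q * z) q i * qPoch (-(q * z)) q i / (qPoch z q i * qPoch (-z) q i) =
      (1 - z ^ 2 * q ^ (2 * i)) / (1 - z ^ 2) := by
  have hz : qPoch z q i ≠ 0 :=
    qPoch_ne_zero (fun m h => hz2 (2 * m) (by linear_combination (z * q ^ m + 1) * h)) i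
  have hz' : qPoch (-z) q i ≠ 0 :=
    qPoch_ne_zero (fun m h => hz2 (2 * m) (by linear_combination (-z * q ^ m + 1) * h)) i
  have hy : 1 - z ^ 2 ≠ 0 := sub_ne_zero.2 (by simpa using (hz2 0).symm)
  have hpos := one_sub_mul_qPoch z q i
  have hneg := one_sub_mul_qPoch (-z) q i
  rw [mul_comm z] at hpos
  rw [neg_mul, mul_comm z] at hneg
  rw [div_eq_div_iff (mul_ne_zero hz hz') hy]
  linear_combination (1 + z) * qPoch (-(q * z)) q i * hpos +
    qPoch z q i * (1 - z * q ^ i) * hneg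

theorem qPoch_mul_wellPoised_weight {z : F} (hz2 : ∀ m : ℕ, z ^ 2 * q ^ m ≠ 1) (r i : ℕ) :
    qPoch (q * z ^ 2) q r * ((1 - z ^ 2 * q ^ (2 * i)) / qPoch (z ^ 2 * q ^ i) q (r + 1)) =
      qPoch (q * z) q i * qPoch (-(q * z)) q i / (qPoch z q i * qPoch (-z) q i) *
        (qPoch (z ^ 2) q i / qPoch (q ^ (r + 1) * z ^ 2) q i) := by
  have hy : 1 - z ^ 2 ≠ 0 := sub_ne_zero.2 (by simpa using (hz2 0).symm)
  have hri := qPoch_mul_pow_ne_zero hz2 (r + 1) i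
  have hir := qPoch_mul_pow_ne_zero hz2 i (r + 1)
  have hcomm := qPoch_mul_qPoch_comm (z ^ 2) q (r + 1) i
  rw [qPoch_succ', mul_comm (z ^ 2) q] at hcomm
  rw [qPoch_mul_qPoch_neg_div hz2, mul_comm (q ^ (r + 1)), mul_div_assoc', div_mul_div_comm,
    div_eq_div_iff hir (mul_ne_zero hy hri)]
  linear_combination (1 - z ^ 2 * q ^ (2 * i)) * hcomm

theorem qPoch_mul_pow_mul_qPoch_div_pow (hq0 : q ≠ 0) {w z : F} (hw0 : w ≠ 0) (hz0 : z ≠ 0)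
    (hwz : ∀ m : ℕ, w * z * q ^ m ≠ 1) (hwz' : ∀ m : ℤ, w / z * q ^ m ≠ 1) (n i : ℕ) :
    qPoch (w * z * q ^ i) q n * qPoch (w / (z * q ^ i)) q n =
      qPoch (w * z) q n * qPoch (w / z) q n * (qPoch (q ^ n * w * z) q i / qPoch (w * z) q i) *
        (qPoch (q * z / w) q i / qPoch (q ^ (1 - (n : ℤ)) * z / w) q i) / (q ^ n) ^ i := by
  have hQi : (q ^ n) ^ i ≠ 0 := pow_ne_zero _ (pow_ne_zero _ hq0)
  have hi := qPoch_ne_zero hwz i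
  have hden : qPoch (q ^ (1 - (n : ℤ)) * z / w) q i ≠ 0 := qPoch_ne_zero (fun m h => by
    refine hwz' (n - 1 - m) ?_
    rw [zpow_sub₀ hq0, zpow_sub₀ hq0, zpow_natCast, zpow_natCast, zpow_one]
    rw [zpow_sub₀ hq0, zpow_natCast, zpow_one] at h
    field_simp at h ⊢
    exact h.symm) i
  have hnum : qPoch (w * z * q ^ i) q n =
      qPoch (w * z) q n * (qPoch (q ^ n * w * z) q i / qPoch (w * z) q i) := by
    rw [mul_div_assoc', eq_div_iff hi, mul_assoc (q ^ n), mul_comm (q ^ n), qPoch_mul_qPoch_comm,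
      mul_comm]
  have hdiv : qPoch (w / (z * q ^ i)) q n = qPoch (w / z) q n *
      (qPoch (q * z / w) q i / qPoch (q ^ (1 - (n : ℤ)) * z / w) q i) / (q ^ n) ^ i := by
    have hpow := qPoch_div_pow hq0 (div_ne_zero hw0 hz0) n i
    rw [div_div, show q / (w / z) = q * z / w by field_simp,
      show q / (w / z * q ^ n) = q ^ (1 - (n : ℤ)) * z / w by
        rw [zpow_sub₀ hq0, zpow_natCast, zpow_one]; field_simp] at hpow
    rw [mul_div_assoc', eq_div_iff hQi, eq_div_iff hden, ← hpow, mul_right_comm]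
  rw [hnum, hdiv]
  ring

theorem wellPoisedSum_eq_basicHypergeometricSum (hq0 : q ≠ 0) {w z : F} (hw0 : w ≠ 0) (hz0 : z ≠ 0)
    (hwz : ∀ m : ℕ, w * z * q ^ m ≠ 1) (hwz' : ∀ m : ℤ, w / z * q ^ m ≠ 1)
    (hz2 : ∀ m : ℕ, z ^ 2 * q ^ m ≠ 1) (n r : ℕ) :
    qPoch (q * z ^ 2) q r * wellPoisedSum q (z ^ 2) r
        (fun i => qPoch (w * z * q ^ i) q n * qPoch (w / (z * q ^ i)) q n) =
      qPoch (w * z) q n * qPoch (w / z) q n *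
        basicHypergeometricSum
          [z ^ 2, q * z, -(q * z), q ^ n * w * z, q * z / w, q ^ (-(r : ℤ))]
          [z, -z, w * z, q ^ (1 - (n : ℤ)) * z / w, q ^ (r + 1) * z ^ 2] q
          (-(q ^ ((r : ℤ) - (n : ℤ)))) r := by
  rw [wellPoisedSum, basicHypergeometricSum_six_five, mul_sum, mul_sum]
  refine sum_congr rfl fun i _ => ?_
  have hweight := qPoch_mul_wellPoised_weight hz2 r i
  have hfactor := qPoch_mul_pow_mul_qPoch_div_pow hq0 hw0 hz0 hwz hwz' n i
  have hζ : (-(q ^ ((r : ℤ) - (n : ℤ)))) ^ i = (-q ^ r) ^ i / (q ^ n) ^ i := by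
    rw [zpow_sub₀ hq0, zpow_natCast, zpow_natCast, ← neg_div, div_pow]
  rw [hfactor, hζ, gaussCoeff_eq_qPoch hq0, zpow_neg, zpow_natCast]
  linear_combination qPoch (q ^ r)⁻¹ q i * (-q ^ r) ^ i / qPoch q q i *
    (qPoch (w * z) q n * qPoch (w / z) q n * (qPoch (q ^ n * w * z) q i / qPoch (w * z) q i) *
      (qPoch (q * z / w) q i / qPoch (q ^ (1 - (n : ℤ)) * z / w) q i) / (q ^ n) ^ i) * hweight

end BasicHypergeometric

/-- Theorem 9: transformation between a terminating ₄φ₃ and a terminating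
very-well-poised ₆φ₅ (both written as finite sums thanks to the factors
`(q^{-n};q)_i` and `(q^{-r};q)_i`). -/
theorem stmt13 {F : Type*} [Field F] (q w z : F) (n r : ℕ) (hr : r ≤ n) (hn : 0 < n)
    (hq0 : q ≠ 0) (hw0 : w ≠ 0) (hz0 : z ≠ 0)
    (hq : ∀ m : ℤ, m ≠ 0 → q ^ m ≠ 1)
    (hw2 : ∀ m : ℤ, w ^ 2 * q ^ m ≠ 1)
    (hwz : ∀ m : ℤ, w * z * q ^ m ≠ 1 ∧ w * z⁻¹ * q ^ m ≠ 1)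
    (hz2 : ∀ m : ℤ, z ^ 2 * q ^ m ≠ 1)
    (hz1 : ∀ m : ℤ, z * q ^ m ≠ 1 ∧ z * q ^ m ≠ -1) :
    (qPoch (q * w ^ 2) (q ^ 2) n / qPoch (w ^ 2) q n) *
      (qPoch (q ^ (-(r : ℤ)) * w / z) q n / qPoch (w / z) q n) *
      ∑ i ∈ Finset.range (n + 1),
        (qPoch (w / z) q i * qPoch (q ^ r * w * z) q i * qPoch (w ^ 2 / q) q i *
            qPoch (q ^ (-(n : ℤ))) q i) /
          (qPoch (w * z) q i * qPoch (q ^ (-(r : ℤ)) * w / z) q i *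
            qPoch (q ^ n * w ^ 2) q i) *
          (-(q ^ (n - r + 1))) ^ i / qPoch q q i
    = q ^ (-(r.choose 2 : ℤ)) * qPoch (-q) q (n - r) *
        (qPoch (q * z ^ 2) (q ^ 2) r / qPoch (q * z ^ 2) q r) *
        ∑ i ∈ Finset.range (r + 1),
          (qPoch (z ^ 2) q i * qPoch (q * z) q i * qPoch (-(q * z)) q i *
              qPoch (q ^ n * w * z) q i * qPoch (q * z / w) q i *
              qPoch (q ^ (-(r : ℤ))) q i) /
            (qPoch z q i * qPoch (-z) q i * qPoch (w * z) q i *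
              qPoch (q ^ (1 - (n : ℤ)) * z / w) q i * qPoch (q ^ (r + 1) * z ^ 2) q i) *
            (-(q ^ ((r : ℤ) - (n : ℤ)))) ^ i / qPoch q q i := by
  have hq' : ∀ m : ℕ, q ^ (m + 1) ≠ 1 := fun m => mod_cast hq (m + 1) (by lia)
  have hw2' : ∀ m : ℕ, w ^ 2 * q ^ m ≠ 1 := fun m => mod_cast hw2 m
  have hz2' : ∀ m : ℕ, z ^ 2 * q ^ m ≠ 1 := fun m => mod_cast hz2 m
  have hwz' : ∀ m : ℕ, w * z * q ^ m ≠ 1 := fun m => mod_cast (hwz m).1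
  have hwdivz : ∀ m : ℤ, w / z * q ^ m ≠ 1 := fun m => div_eq_mul_inv w z ▸ (hwz m).2
  have hmain := normalizedPhi43_eq_wellPoisedSum hq0 hq' hw0 hw2' hr hz0 hz2'
  have h43 := normalizedPhi43_mul_div_eq_basicHypergeometricSum hq0 hz0 hwz' hwdivz hr
  have h65 := wellPoisedSum_eq_basicHypergeometricSum hq0 hw0 hz0 hwz' hwdivz hz2' n r
  have hU := qPoch_ne_zero hwz' n
  have hV : qPoch (w / z) q n ≠ 0 := qPoch_ne_zero (fun m => mod_cast hwdivz m) n
  have hW := qPoch_ne_zero hw2' n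
  have hZ : qPoch (q * z ^ 2) q r ≠ 0 := by
    simpa only [pow_one, mul_comm q] using qPoch_mul_pow_ne_zero hz2' 1 r
  rw [h43] at hmain
  rw [← basicHypergeometricSum_four_three, ← basicHypergeometricSum_six_five,
    zpow_neg _ (r.choose 2 : ℤ), zpow_natCast]
  generalize qPoch (q * w ^ 2) (q ^ 2) n = A, qPoch (q * z ^ 2) (q ^ 2) r = B,
    qPoch (q * z ^ 2) q r = C, qPoch (q ^ (-(r : ℤ)) * w / z) q n = V,
    basicHypergeometricSum _ _ q _ n = Φ, basicHypergeometricSum _ _ q _ r = Ψ at *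
  field_simp
  refine mul_left_cancel₀ hU ?_
  linear_combination C * hmain + qPoch (w ^ 2) q n * qPoch (-q) q (n - r) * B * h65
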